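/- (Nonlocal stability bound.) Let d ≥ 1, let Ω ⊂ ℝ^d be bounded and open, let δ > 0, and let Ω_δ^c, Ω̂_δ be as defined. Let k : Ω̂_δ × Ω̂_δ → [0,∞) be measurable and satisfy: (i) k(x,y) = 0 whenever |y−x| ≥ δ; (ii) sup_{x∈Ω} ∫_{Ω̂_δ} k(x,y) dy < ∞; (iii) ∫_{Ω̂_δ} (y−x) k(x,y) dy = 0 for every x ∈ Ω; (iv) there exists η > 0 such that 2∫_{Ω̂_δ} |y−x|² k(x,y) dy ≥ η for every x ∈ Ω. Suppose x* ∈ ℝ^d and R > 0 are such that Ω̂_δ is contained in the closed ball B̄_R(x*). Then for every bounded measurable u : Ω̂_δ → ℝ, sup_{x∈Ω} |u(x)| ≤ sup_{x∈Ω_δ^c} |u(x)| + (2R²/η) · sup_{x∈Ω} |L_k u(x)|, where L_k u(x) = 2∫_{Ω̂_δ} (u(y) − u(x)) k(x,y) dy. -/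

import Mathlib

open MeasureTheory Metric Set

noncomputable section

/-- The part of the complement of `Ω` within distance `δ` of the boundary. -/
def omegaC {d : ℕ} (Ω : Set (EuclideanSpace ℝ (Fin d))) (δ : ℝ) :
    Set (EuclideanSpace ℝ (Fin d)) :=
  {y | y ∉ Ω ∧ infDist y (frontier Ω) < δ}

/-- `Ω̂_δ = Ω ∪ Ω_δ^c`. -/
def hatΩ {d : ℕ} (Ω : Set (EuclideanSpace ℝ (Fin d))) (δ : ℝ) :
    Set (EuclideanSpace ℝ (Fin d)) :=
  Ω ∪ omegaC Ω δ

/-! Suppose `L u ≥ -F` on `Ω`. Since the first moments of the kernel vanish, `L` maps the barrier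
`‖· - c‖ ^ 2` to twice the second moment, which is at least `η`. Hence for `a > F / η` the function
`w = u + a * ‖· - c‖ ^ 2` satisfies `L w ≥ a * η - F > 0` on `Ω`. Such a `w` stays a fixed distance
below its supremum on `Ω`, because the mass of the kernel is bounded; so `w` is bounded by its
values on the collar `Γ`, where the barrier costs at most `a * R ^ 2`. Let `a` decrease to `F / η`,
and apply the resulting bound to `u` and to `-u`. -/

open scoped Topology
open Filter (Tendsto)

section Operator

variable {α : Type*} [MeasurableSpace α] {μ : Measure α} {k : α → α → ℝ} {Ω Γ : Set α}
  {u v : α → ℝ} {x : α}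

/-- The nonlocal operator `L_k u(x) = 2 ∫ (u(y) - u(x)) k(x, y) dμ(y)`. The domain of integration
is encoded in `μ`: for integration over `Ω̂_δ`, take Lebesgue measure restricted to `Ω̂_δ`. -/
def nonlocalOp (μ : Measure α) (k : α → α → ℝ) (u : α → ℝ) (x : α) : ℝ :=
  2 * ∫ y, (u y - u x) * k x y ∂μ

/-- Nonnegative kernels whose mass `∫ k(x, y) dμ(y)` is finite and bounded uniformly in `x ∈ Ω`;
the class of kernels for which `nonlocalOp` obeys a maximum principle. -/
structure IsBoundedKernel (μ : Measure α) (Ω : Set α) (k : α → α → ℝ) : Prop where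
  nonneg : ∀ x ∈ Ω, ∀ᵐ y ∂μ, 0 ≤ k x y
  integrable : ∀ x ∈ Ω, Integrable (k x) μ
  exists_mass_le : ∃ C : ℝ, ∀ x ∈ Ω, ∫ y, k x y ∂μ ≤ C

lemma integrable_sub_const_mul_of_ae_abs_le {κ : α → ℝ} {M : ℝ} (hκ : Integrable κ μ)
    (hu : AEStronglyMeasurable u μ) (hM : ∀ᵐ y ∂μ, |u y| ≤ M) (c : ℝ) :
    Integrable (fun y => (u y - c) * κ y) μ :=
  hκ.bdd_mul (c := M + |c|) (hu.sub aestronglyMeasurable_const) <|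
    hM.mono fun y hy => (norm_sub_le (u y) c).trans (add_le_add_left hy _)

lemma nonlocalOp_neg : nonlocalOp μ k (-u) x = -nonlocalOp μ k u x := by
  have hneg (y : α) : (-u y - -u x) * k x y = -((u y - u x) * k x y) := by ring
  simp only [nonlocalOp, Pi.neg_apply, hneg, integral_neg, mul_neg]

lemma nonlocalOp_add_const_mul (hu : Integrable (fun y => (u y - u x) * k x y) μ)
    (hv : Integrable (fun y => (v y - v x) * k x y) μ) (a : ℝ) :
    nonlocalOp μ k (fun y => u y + a * v y) x = nonlocalOp μ k u x + a * nonlocalOp μ k v x := by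
  have hsplit (y : α) : (u y + a * v y - (u x + a * v x)) * k x y =
      (u y - u x) * k x y + a * ((v y - v x) * k x y) := by ring
  simp only [nonlocalOp, hsplit]
  rw [integral_add hu (hv.const_mul a), integral_const_mul]
  ring

lemma nonlocalOp_le_of_ae_le {S : ℝ} (hk0 : ∀ᵐ y ∂μ, 0 ≤ k x y) (hk : Integrable (k x) μ)
    (hu : Integrable (fun y => (u y - u x) * k x y) μ) (hS : ∀ᵐ y ∂μ, u y ≤ S) :
    nonlocalOp μ k u x ≤ 2 * ((S - u x) * ∫ y, k x y ∂μ) := by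
  rw [nonlocalOp, ← integral_const_mul (S - u x)]
  refine mul_le_mul_of_nonneg_left (integral_mono_ae hu (hk.const_mul _) ?_) zero_le_two
  filter_upwards [hk0, hS] with y hky hy
  gcongr

lemma abs_nonlocalOp_le_of_ae_abs_le {M : ℝ} (hk0 : ∀ᵐ y ∂μ, 0 ≤ k x y)
    (hk : Integrable (k x) μ) (hum : AEStronglyMeasurable u μ) (hM : ∀ᵐ y ∂μ, |u y| ≤ M)
    (hx : |u x| ≤ M) :
    |nonlocalOp μ k u x| ≤ 4 * M * ∫ y, k x y ∂μ := by
  have upper {v : α → ℝ} (hvm : AEStronglyMeasurable v μ) (hv : ∀ᵐ y ∂μ, |v y| ≤ M)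
      (hvx : |v x| ≤ M) : nonlocalOp μ k v x ≤ 4 * M * ∫ y, k x y ∂μ :=
    calc nonlocalOp μ k v x
        ≤ 2 * ((M - v x) * ∫ y, k x y ∂μ) :=
          nonlocalOp_le_of_ae_le hk0 hk (integrable_sub_const_mul_of_ae_abs_le hk hvm hv _)
            (hv.mono fun _ hy => (le_abs_self _).trans hy)
      _ ≤ 2 * ((M - -M) * ∫ y, k x y ∂μ) := by
          gcongr
          · exact integral_nonneg_of_ae hk0
          · exact (abs_le.1 hvx).1
      _ = 4 * M * ∫ y, k x y ∂μ := by ring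
  refine abs_le'.2 ⟨upper hum hM hx, ?_⟩
  rw [← nonlocalOp_neg]
  exact upper hum.neg (by simpa only [Pi.neg_apply, abs_neg] using hM)
    (by rwa [Pi.neg_apply, abs_neg])

lemma IsBoundedKernel.bddAbove_abs_nonlocalOp (hk : IsBoundedKernel μ Ω k)
    (hum : AEStronglyMeasurable u μ) {M : ℝ} (hM : ∀ᵐ y ∂μ, |u y| ≤ M)
    (hMΩ : ∀ x ∈ Ω, |u x| ≤ M) : BddAbove ((fun x => |nonlocalOp μ k u x|) '' Ω) := by
  obtain ⟨C, hC⟩ := hk.exists_mass_le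
  refine ⟨4 * M * C, ?_⟩
  rintro _ ⟨x, hx, rfl⟩
  have hM0 : 0 ≤ M := (abs_nonneg _).trans (hMΩ x hx)
  calc |nonlocalOp μ k u x|
      ≤ 4 * M * ∫ y, k x y ∂μ :=
        abs_nonlocalOp_le_of_ae_abs_le (hk.nonneg x hx) (hk.integrable x hx) hum hM (hMΩ x hx)
    _ ≤ 4 * M * C := by gcongr; exact hC x hx

theorem IsBoundedKernel.le_of_pos_le_nonlocalOp (hk : IsBoundedKernel μ Ω k)
    (hμ : ∀ᵐ y ∂μ, y ∈ Ω ∪ Γ) (hint : ∀ x ∈ Ω, Integrable (fun y => (u y - u x) * k x y) μ)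
    (hbdd : BddAbove (u '' (Ω ∪ Γ))) {ε B : ℝ} (hε : 0 < ε)
    (hL : ∀ x ∈ Ω, ε ≤ nonlocalOp μ k u x) (hB : ∀ y ∈ Γ, u y ≤ B) (hx : x ∈ Ω) : u x ≤ B := by
  obtain ⟨C, hC⟩ := hk.exists_mass_le
  set S := sSup (u '' (Ω ∪ Γ))
  have le_S : ∀ y ∈ Ω ∪ Γ, u y ≤ S := fun y hy => le_csSup hbdd (mem_image_of_mem u hy)
  have gap : ∀ z ∈ Ω, ε ≤ (S - u z) * (2 * C) := fun z hz =>
    calc ε ≤ nonlocalOp μ k u z := hL z hz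
      _ ≤ 2 * ((S - u z) * ∫ y, k z y ∂μ) :=
          nonlocalOp_le_of_ae_le (hk.nonneg z hz) (hk.integrable z hz) (hint z hz) (hμ.mono le_S)
      _ ≤ 2 * ((S - u z) * C) := by
          gcongr
          · exact sub_nonneg.2 (le_S z (.inl hz))
          · exact hC z hz
      _ = (S - u z) * (2 * C) := by ring
  have hC0 : 0 < 2 * C :=
    pos_of_mul_pos_right (hε.trans_le (gap x hx)) (sub_nonneg.2 (le_S x (.inl hx)))
  by_contra! hBx
  have hlt : max B (S - ε / (2 * C)) < S :=
    max_lt (hBx.trans_le (le_S x (.inl hx))) (sub_lt_self S (div_pos hε hC0))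
  obtain ⟨_, ⟨z, hz, rfl⟩, hzS⟩ := exists_lt_of_lt_csSup (image_nonempty.2 ⟨x, .inl hx⟩) hlt
  obtain ⟨hBz, hgapz⟩ := max_lt_iff.1 hzS
  rcases hz with hzΩ | hzΓ
  · linarith [(div_le_iff₀ hC0).2 (gap z hzΩ)]
  · exact (hB z hzΓ).not_gt hBz

end Operator

section Barrier

variable {E : Type*} [NormedAddCommGroup E] [MeasurableSpace E] [OpensMeasurableSpace E]
  {μ : Measure E} {k : E → E → ℝ} {Ω Γ : Set E} {u : E → ℝ} {c x : E} {R η : ℝ}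

lemma integrable_norm_sub_sq_sub_const_mul {κ : E → ℝ} (hκ : Integrable κ μ)
    (hball : ∀ᵐ y ∂μ, y ∈ closedBall c R) (b : ℝ) :
    Integrable (fun y => (‖y - c‖ ^ 2 - b) * κ y) μ := by
  refine integrable_sub_const_mul_of_ae_abs_le (M := R ^ 2) hκ
    (by fun_prop : Continuous fun y : E => ‖y - c‖ ^ 2).aestronglyMeasurable ?_ b
  filter_upwards [hball] with y hy
  rw [abs_pow, abs_norm]
  exact pow_le_pow_left₀ (norm_nonneg _) (mem_closedBall_iff_norm.1 hy) 2

variable [InnerProductSpace ℝ E] [CompleteSpace E] [SecondCountableTopology E]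

lemma nonlocalOp_norm_sub_sq (hk : Integrable (k x) μ) (hball : ∀ᵐ y ∂μ, y ∈ closedBall c R)
    (hfirst : ∫ y, k x y • (y - x) ∂μ = 0) :
    nonlocalOp μ k (fun y => ‖y - c‖ ^ 2) x = 2 * ∫ y, ‖y - x‖ ^ 2 * k x y ∂μ := by
  have hr : ∀ᵐ y ∂μ, y ∈ closedBall x (R + dist x c) :=
    hball.mono fun y hy => (dist_triangle_right y x c).trans (add_le_add_left hy _)
  have hsq : Integrable (fun y => ‖y - x‖ ^ 2 * k x y) μ := by
    simpa only [sub_zero] using integrable_norm_sub_sq_sub_const_mul hk hr 0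
  have hlin : Integrable (fun y => k x y • (y - x)) μ :=
    hk.smul_bdd (R + dist x c)
      (by fun_prop : Continuous fun y : E => y - x).aestronglyMeasurable
      (hr.mono fun _ => mem_closedBall_iff_norm.1)
  have hcross : ∫ y, inner ℝ (x - c) (k x y • (y - x)) ∂μ = 0 := by
    rw [integral_inner (𝕜 := ℝ) hlin, hfirst, inner_zero_right]
  have hexpand (y : E) : (‖y - c‖ ^ 2 - ‖x - c‖ ^ 2) * k x y =
      ‖y - x‖ ^ 2 * k x y + 2 * inner ℝ (x - c) (k x y • (y - x)) := by
    rw [← sub_add_sub_cancel' x c y, norm_add_sq_real, inner_smul_right]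
    ring
  simp only [nonlocalOp, hexpand]
  rw [integral_add hsq ((hlin.const_inner (𝕜 := ℝ) (x - c)).const_mul 2), integral_const_mul,
    hcross, mul_zero, add_zero]

theorem IsBoundedKernel.le_add_mul_sq_of_neg_le_nonlocalOp (hk : IsBoundedKernel μ Ω k)
    (hμ : ∀ᵐ y ∂μ, y ∈ Ω ∪ Γ) (hfirst : ∀ x ∈ Ω, ∫ y, k x y • (y - x) ∂μ = 0)
    (hsecond : ∀ x ∈ Ω, η ≤ 2 * ∫ y, ‖y - x‖ ^ 2 * k x y ∂μ)
    (hball : Ω ∪ Γ ⊆ closedBall c R) (hum : AEStronglyMeasurable u μ)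
    {M : ℝ} (hM : ∀ y ∈ Ω ∪ Γ, |u y| ≤ M) {F G a : ℝ} (ha : 0 ≤ a) (haF : F < a * η)
    (hL : ∀ x ∈ Ω, -F ≤ nonlocalOp μ k u x) (hG : ∀ y ∈ Γ, u y ≤ G) (hx : x ∈ Ω) :
    u x ≤ G + a * R ^ 2 := by
  have barrier_le : ∀ y ∈ Ω ∪ Γ, a * ‖y - c‖ ^ 2 ≤ a * R ^ 2 := fun y hy => by
    gcongr
    exact mem_closedBall_iff_norm.1 (hball hy)
  have barrier_int : ∀ z ∈ Ω, Integrable (fun y => (‖y - c‖ ^ 2 - ‖z - c‖ ^ 2) * k z y) μ :=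
    fun z hz => integrable_norm_sub_sq_sub_const_mul (hk.integrable z hz) (hμ.mono hball) _
  have u_int : ∀ z ∈ Ω, Integrable (fun y => (u y - u z) * k z y) μ := fun z hz =>
    integrable_sub_const_mul_of_ae_abs_le (hk.integrable z hz) hum (hμ.mono hM) _
  set w : E → ℝ := fun y => u y + a * ‖y - c‖ ^ 2 with hw
  have w_int : ∀ z ∈ Ω, Integrable (fun y => (w y - w z) * k z y) μ := fun z hz =>
    ((u_int z hz).add ((barrier_int z hz).const_mul a)).congr <| .of_forall fun y => by
      simp only [hw, Pi.add_apply]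
      ring
  have w_bdd : BddAbove (w '' (Ω ∪ Γ)) := by
    refine ⟨M + a * R ^ 2, ?_⟩
    rintro _ ⟨y, hy, rfl⟩
    exact add_le_add ((le_abs_self _).trans (hM y hy)) (barrier_le y hy)
  have w_op : ∀ z ∈ Ω, a * η - F ≤ nonlocalOp μ k w z := fun z hz => by
    rw [nonlocalOp_add_const_mul (u_int z hz) (barrier_int z hz),
      nonlocalOp_norm_sub_sq (hk.integrable z hz) (hμ.mono hball) (hfirst z hz)]
    linarith [hL z hz, mul_le_mul_of_nonneg_left (hsecond z hz) ha]
  calc u x ≤ w x := le_add_of_nonneg_right (by positivity)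
    _ ≤ G + a * R ^ 2 :=
      hk.le_of_pos_le_nonlocalOp hμ w_int w_bdd (sub_pos.2 haF) w_op
        (fun y hy => add_le_add (hG y hy) (barrier_le y (.inr hy))) hx

theorem IsBoundedKernel.abs_le_add_of_abs_nonlocalOp_le (hk : IsBoundedKernel μ Ω k)
    (hμ : ∀ᵐ y ∂μ, y ∈ Ω ∪ Γ) (hfirst : ∀ x ∈ Ω, ∫ y, k x y • (y - x) ∂μ = 0) (hη : 0 < η)
    (hsecond : ∀ x ∈ Ω, η ≤ 2 * ∫ y, ‖y - x‖ ^ 2 * k x y ∂μ)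
    (hball : Ω ∪ Γ ⊆ closedBall c R) (hum : AEStronglyMeasurable u μ)
    {M : ℝ} (hM : ∀ y ∈ Ω ∪ Γ, |u y| ≤ M) {F G : ℝ}
    (hL : ∀ x ∈ Ω, |nonlocalOp μ k u x| ≤ F) (hG : ∀ y ∈ Γ, |u y| ≤ G) (hx : x ∈ Ω) :
    |u x| ≤ G + R ^ 2 / η * F := by
  have hF : 0 ≤ F := (abs_nonneg _).trans (hL x hx)
  have bound : ∀ a, F / η < a → |u x| ≤ G + a * R ^ 2 := by
    intro a haF
    have ha : 0 ≤ a := (div_nonneg hF hη.le).trans haF.le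
    have haη : F < a * η := (div_lt_iff₀ hη).1 haF
    refine abs_le'.2 ⟨?_, ?_⟩
    · exact hk.le_add_mul_sq_of_neg_le_nonlocalOp hμ hfirst hsecond hball hum hM ha haη
        (fun z hz => (abs_le.1 (hL z hz)).1) (fun y hy => (abs_le'.1 (hG y hy)).1) hx
    · refine hk.le_add_mul_sq_of_neg_le_nonlocalOp (u := -u) (M := M) hμ hfirst hsecond hball
        hum.neg (fun y hy => ?_) ha haη (fun z hz => ?_) (fun y hy => (abs_le'.1 (hG y hy)).2) hx
      · simpa only [Pi.neg_apply, abs_neg] using hM y hy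
      · rw [nonlocalOp_neg]
        exact neg_le_neg (abs_le.1 (hL z hz)).2
  have hlim : Tendsto (fun a => G + a * R ^ 2) (𝓝[>] (F / η)) (𝓝 (G + F / η * R ^ 2)) :=
    (Continuous.tendsto (by fun_prop) _).mono_left nhdsWithin_le_nhds
  rw [div_mul_comm]
  exact ge_of_tendsto hlim (eventually_nhdsWithin_of_forall bound)

lemma sSup_image_abs_nonneg {α : Type*} (f : α → ℝ) (s : Set α) :
    0 ≤ sSup ((fun x => |f x|) '' s) :=
  Real.sSup_nonneg (forall_mem_image.2 fun x _ => abs_nonneg (f x))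

theorem stmt3_general (hk : IsBoundedKernel μ Ω k) (hμ : ∀ᵐ y ∂μ, y ∈ Ω ∪ Γ)
    (hfirst : ∀ x ∈ Ω, ∫ y, k x y • (y - x) ∂μ = 0) (hη : 0 < η)
    (hsecond : ∀ x ∈ Ω, η ≤ 2 * ∫ y, ‖y - x‖ ^ 2 * k x y ∂μ)
    (hball : Ω ∪ Γ ⊆ closedBall c R) (hum : AEStronglyMeasurable u μ)
    (hub : ∃ M : ℝ, ∀ y ∈ Ω ∪ Γ, |u y| ≤ M) :
    sSup ((fun x => |u x|) '' Ω) ≤ sSup ((fun x => |u x|) '' Γ) +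
      R ^ 2 / η * sSup ((fun x => |nonlocalOp μ k u x|) '' Ω) := by
  obtain ⟨M, hM⟩ := hub
  have bddAbove_u : BddAbove ((fun x => |u x|) '' Γ) :=
    ⟨M, forall_mem_image.2 fun y hy => hM y (.inr hy)⟩
  have bddAbove_op : BddAbove ((fun x => |nonlocalOp μ k u x|) '' Ω) :=
    hk.bddAbove_abs_nonlocalOp hum (hμ.mono hM) fun x hx => hM x (.inl hx)
  refine Real.sSup_le (forall_mem_image.2 fun x hx => ?_) ?_
  · exact hk.abs_le_add_of_abs_nonlocalOp_le hμ hfirst hη hsecond hball hum hM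
      (fun z hz => le_csSup bddAbove_op (mem_image_of_mem _ hz))
      (fun y hy => le_csSup bddAbove_u (mem_image_of_mem _ hy)) hx
  · have hΓ := sSup_image_abs_nonneg u Γ
    have hΩ := sSup_image_abs_nonneg (nonlocalOp μ k u) Ω
    positivity

end Barrier

lemma measurableSet_hatΩ {d : ℕ} {Ω : Set (EuclideanSpace ℝ (Fin d))} (hΩ : MeasurableSet Ω)
    (δ : ℝ) : MeasurableSet (hatΩ Ω δ) :=
  hΩ.union (hΩ.compl.inter (measurable_infDist measurableSet_Iio))

/-- nonlocal stability bound. -/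
theorem stmt3 (d : ℕ) (hd : 1 ≤ d) (Ω : Set (EuclideanSpace ℝ (Fin d)))
    (hΩb : Bornology.IsBounded Ω) (hΩo : IsOpen Ω) (δ : ℝ) (hδ : 0 < δ)
    (k : EuclideanSpace ℝ (Fin d) → EuclideanSpace ℝ (Fin d) → ℝ)
    (hkm : Measurable (Function.uncurry k))
    (hk0 : ∀ x ∈ hatΩ Ω δ, ∀ y ∈ hatΩ Ω δ, 0 ≤ k x y)
    (hksupp : ∀ x ∈ hatΩ Ω δ, ∀ y ∈ hatΩ Ω δ, δ ≤ ‖y - x‖ → k x y = 0)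
    (hkint : ∀ x ∈ Ω, IntegrableOn (fun y => k x y) (hatΩ Ω δ))
    (hkbd : ∃ Cb : ℝ, ∀ x ∈ Ω, (∫ y in hatΩ Ω δ, k x y) ≤ Cb)
    (hkfirst : ∀ x ∈ Ω, (∫ y in hatΩ Ω δ, k x y • (y - x)) = 0)
    (η : ℝ) (hη : 0 < η)
    (hklow : ∀ x ∈ Ω, η ≤ 2 * ∫ y in hatΩ Ω δ, ‖y - x‖ ^ 2 * k x y)
    (xstar : EuclideanSpace ℝ (Fin d)) (R : ℝ) (hR : 0 < R)
    (hcont : hatΩ Ω δ ⊆ closedBall xstar R)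
    (u : EuclideanSpace ℝ (Fin d) → ℝ) (hum : Measurable u)
    (hub : ∃ Mu : ℝ, ∀ x ∈ hatΩ Ω δ, |u x| ≤ Mu) :
    sSup ((fun x => |u x|) '' Ω) ≤
      sSup ((fun x => |u x|) '' omegaC Ω δ) +
        (2 * R ^ 2 / η) *
          sSup ((fun x => |2 * ∫ y in hatΩ Ω δ, (u y - u x) * k x y|) '' Ω) := by
  have hH : MeasurableSet (hatΩ Ω δ) := measurableSet_hatΩ hΩo.measurableSet δ
  have hk : IsBoundedKernel (volume.restrict (hatΩ Ω δ)) Ω k :=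
    ⟨fun x hx => ae_restrict_of_forall_mem hH (hk0 x (.inl hx)), hkint, hkbd⟩
  have hconst : R ^ 2 / η ≤ 2 * R ^ 2 / η := by
    gcongr
    linarith [sq_nonneg R]
  exact (stmt3_general hk (ae_restrict_mem hH) hkfirst hη hklow hcont hum.aestronglyMeasurable
    hub).trans (add_le_add_right (mul_le_mul_of_nonneg_right hconst (sSup_image_abs_nonneg _ _)) _)
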